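/- arXiv:2506.08590 — 2 statements merged into one kernel-verified Lean document; each statement's English description precedes it below -/
import Mathlib

section
/- Let H be a complex Hilbert space, ω a bounded self-adjoint operator on H with ω ≥ Id, f ∈ H and λ ≥ 0. Set g = ω^{1/2}f and ξ = (ω² + 4λ|g⟩⟨g|)^{1/2}. Then the operator ω^{-1/2}ξω^{-1/2} − Id is positive, the operator Id − ω^{1/2}ξ⁻¹ω^{1/2} is positive, and for every Hilbert (orthonormal) basis (e_i) of H one has ∑_i ⟨e_i, (ω^{-1/2}ξω^{-1/2} − Id) e_i⟩ ≤ 2λ‖ω^{-1/2}f‖² and ∑_i ⟨e_i, (Id − ω^{1/2}ξ⁻¹ω^{1/2}) e_i⟩ ≤ 2λ‖ω^{-1/2}f‖². -/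
open scoped InnerProductSpace
open MeasureTheory
set_option synthInstance.maxHeartbeats 1000000
set_option maxHeartbeats 1000000

/-- The rank-one operator `|g⟩⟨g| : x ↦ ⟨g, x⟩g`. -/
noncomputable def rankOne {H : Type*} [NormedAddCommGroup H] [InnerProductSpace ℂ H]
    (g : H) : H →L[ℂ] H := (innerSL ℂ g).smulRight g

/-- The flow `exp(-tω)`. -/
lemma tb_flow {H : Type*} [NormedAddCommGroup H] [InnerProductSpace ℂ H] [CompleteSpace H]
    (ω : H →L[ℂ] H) (hω : IsSelfAdjoint ω) :
    ∃ E : ℝ → (H →L[ℂ] H), E 0 = 1 ∧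
      (∀ t x, HasDerivAt (fun t => E t x) (-(ω (E t x))) t) ∧
      (∀ t, IsSelfAdjoint (E t)) ∧
      ∀ S, Commute S ω → ∀ t, Commute S (E t) := by
  refine ⟨fun t => NormedSpace.exp (t • (-ω)), by simp, ?_, ?_, ?_⟩
  · intro t x
    have h := hasDerivAt_exp_smul_const' (𝕂 := ℝ) (-ω) t
    have h2 := (((ContinuousLinearMap.apply ℂ H x).restrictScalars ℝ).hasFDerivAt).comp_hasDerivAt t h
    simpa [Function.comp_def] using h2
  · intro t
    exact IsSelfAdjoint.exp (((IsSelfAdjoint.all t).smul hω.neg))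
  · intro S hS t
    exact Commute.exp_right ((hS.neg_right).smul_right t)

lemma tb_deriv {H : Type*} [NormedAddCommGroup H] [InnerProductSpace ℂ H]
    (D : H →L[ℂ] H) (u : ℝ → H) (u' : H) (t : ℝ) (hu : HasDerivAt u u' t) :
    HasDerivAt (fun t => (⟪u t, D (u t)⟫_ℂ).re) ((⟪u t, D u'⟫_ℂ).re + (⟪u', D (u t)⟫_ℂ).re) t := by
  have h1 : HasDerivAt (fun t => D (u t)) (D u') t :=
    ((D.restrictScalars ℝ).hasFDerivAt).comp_hasDerivAt t hu
  have h2 := HasDerivAt.inner ℂ hu h1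
  have h3 := (Complex.reCLM.hasFDerivAt).comp_hasDerivAt t h2
  simpa [Function.comp_def] using h3

lemma tb_decay {H : Type*} [NormedAddCommGroup H] [InnerProductSpace ℂ H] [CompleteSpace H]
    (ω : H →L[ℂ] H) (hω1 : (1 : H →L[ℂ] H) ≤ ω) (hω : IsSelfAdjoint ω) (u : ℝ → H)
    (hu : ∀ t, HasDerivAt u (-(ω (u t))) t) :
    Filter.Tendsto u Filter.atTop (nhds 0) := by
  have hpos : ∀ x, ‖x‖ ^ 2 ≤ (⟪x, ω x⟫_ℂ).re := by
    intro x
    have := ((ContinuousLinearMap.le_def _ _).1 hω1).re_inner_nonneg_right x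
    have h2 : (⟪x, x⟫_ℂ).re = ‖x‖ ^ 2 := by
      simpa using inner_self_eq_norm_sq (𝕜 := ℂ) x
    simp [inner_sub_right] at this
    simp [← h2]
    linarith
  have hn : ∀ x : H, (⟪x, x⟫_ℂ).re = ‖x‖ ^ 2 := fun x => by
      simpa using inner_self_eq_norm_sq (𝕜 := ℂ) x
  have hd : ∀ t, HasDerivAt (fun t => -(Real.exp (2 * t) * ‖u t‖ ^ 2))
      (-((Real.exp (2 * t) * 2) * ‖u t‖ ^ 2 + Real.exp (2 * t) * (-2 * (⟪u t, ω (u t)⟫_ℂ).re))) t := by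
    intro t
    have h1 := tb_deriv 1 u _ t (hu t)
    have h2 : HasDerivAt (fun t : ℝ => Real.exp (2 * t)) (Real.exp (2 * t) * 2) t := by
      simpa using ((hasDerivAt_id t).const_mul 2).exp
    have h3 : (⟪ω (u t), u t⟫_ℂ).re = (⟪u t, ω (u t)⟫_ℂ).re := by
      rw [← inner_conj_symm, Complex.conj_re]
    simp only [one_apply_eq_self, hn, inner_neg_left, inner_neg_right, Complex.neg_re, h3] at h1
    refine (h2.mul h1).neg.congr_deriv ?_
    ring
  have hm := monotone_of_hasDerivAt_nonneg hd (fun t => by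
    have := hpos (u t)
    have he := Real.exp_pos (2 * t)
    simp only [Pi.zero_apply]
    nlinarith)
  rw [tendsto_zero_iff_norm_tendsto_zero]
  refine squeeze_zero' (g := fun t => Real.exp (-t) * ‖u 0‖) (.of_forall fun t => norm_nonneg _) ?_ ?_
  · filter_upwards [Filter.eventually_ge_atTop 0] with t ht
    have := hm ht
    simp at this
    have e1 : Real.exp (-t) ^ 2 * Real.exp (2 * t) = 1 := by
      rw [← Real.exp_nat_mul, ← Real.exp_add]; simp
    refine abs_le_of_sq_le_sq' ?_ (by positivity) |>.2
    calc ‖u t‖ ^ 2 = Real.exp (-t) ^ 2 * (Real.exp (2 * t) * ‖u t‖ ^ 2) := by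
          rw [← mul_assoc, e1, one_mul]
      _ ≤ Real.exp (-t) ^ 2 * ‖u 0‖ ^ 2 := by gcongr
      _ = _ := by ring
  · simpa using (Real.tendsto_exp_neg_atTop_nhds_zero).mul_const ‖u 0‖

/-- Key Lyapunov comparison. -/
lemma tb_key {H : Type*} [NormedAddCommGroup H] [InnerProductSpace ℂ H] [CompleteSpace H]
    {ι : Type*} (ω D S R : H →L[ℂ] H) (hω : IsSelfAdjoint ω) (hω1 : (1 : H →L[ℂ] H) ≤ ω)
    (hD : IsSelfAdjoint D) (hS : IsSelfAdjoint S) (hR : IsSelfAdjoint R)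
    (hSS : S * S = ω) (hSR : S * R = 1) (hRS : R * S = 1)
    (f : H) (lam : ℝ) (hlam : 0 ≤ lam)
    (hlyap : ω * D + D * ω + D * D = (4 * lam) • rankOne (S f))
    (e : ι → H) (he : Orthonormal ℂ e) (s : Finset ι) :
    ∑ i ∈ s, (⟪R (e i), D (R (e i))⟫_ℂ).re ≤ 2 * lam * ‖R f‖ ^ 2 := by
  obtain ⟨E, hE0, hE, hEsa, hEc⟩ := tb_flow ω hω
  have hn : ∀ x : H, (⟪x, x⟫_ℂ).re = ‖x‖ ^ 2 := fun x => by
      simpa using inner_self_eq_norm_sq (𝕜 := ℂ) x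
  have hcS : ∀ t, Commute S (E t) := hEc S (by rw [← hSS]; exact (Commute.refl S).mul_right (Commute.refl S))
  have sw : ∀ (A : H →L[ℂ] H), IsSelfAdjoint A → ∀ x y, ⟪A x, y⟫_ℂ = ⟪x, A y⟫_ℂ :=
    fun A hA x y => (ContinuousLinearMap.isSelfAdjoint_iff_isSymmetric.1 hA) x y
  have hSRx : ∀ x, S (R x) = x := fun x => by
    simpa using congrArg (fun A : H →L[ℂ] H => A x) hSR
  have hRSx : ∀ x, R (S x) = x := fun x => by
    simpa using congrArg (fun A : H →L[ℂ] H => A x) hRS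
  have hSEx : ∀ t x, S (E t x) = E t (S x) := fun t x => by
    simpa using congrArg (fun A : H →L[ℂ] H => A x) (hcS t).eq
  have hSSx : ∀ x, ω x = S (S x) := fun x => by rw [← hSS]; rfl
  -- derivative of the D-form
  have hlx : ∀ x, -((⟪x, D (-(ω x))⟫_ℂ).re + (⟪-(ω x), D x⟫_ℂ).re) ≤ 4 * lam * ‖⟪S f, x⟫_ℂ‖ ^ 2 := by
    intro x
    have h1 := congrArg (fun A : H →L[ℂ] H => (⟪x, A x⟫_ℂ).re) hlyap
    change (⟪x, ω (D x) + D (ω x) + D (D x)⟫_ℂ).re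
      = (⟪x, (4 * lam) • (⟪S f, x⟫_ℂ • S f)⟫_ℂ).re at h1
    rw [inner_add_right, inner_add_right, Complex.add_re, Complex.add_re] at h1
    have h2 : (⟪x, D (D x)⟫_ℂ).re = ‖D x‖ ^ 2 := by rw [← sw D hD, hn]
    have h3 : (⟪x, (4 * lam) • (⟪S f, x⟫_ℂ • S f)⟫_ℂ).re = 4 * lam * ‖⟪S f, x⟫_ℂ‖ ^ 2 := by
      rw [← Complex.coe_smul, inner_smul_right, inner_smul_right, Complex.re_ofReal_mul]
      have h4 : (⟪S f, x⟫_ℂ * ⟪x, S f⟫_ℂ).re = ‖⟪S f, x⟫_ℂ * ⟪x, S f⟫_ℂ‖ :=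
        inner_mul_symm_re_eq_norm (𝕜 := ℂ) (S f) x
      rw [h4, norm_mul, norm_inner_symm x]
      ring
    rw [h2, h3, ← sw ω hω] at h1
    simp only [map_neg, inner_neg_left, inner_neg_right, Complex.neg_re]
    nlinarith [sq_nonneg ‖D x‖]
  have hψ : ∀ t, HasDerivAt (fun t => 2 * lam * ‖E t (R f)‖ ^ 2) (-(4 * lam * ‖E t f‖ ^ 2)) t := by
    intro t
    have h1 := (tb_deriv 1 _ _ t (hE t (R f))).const_mul (2 * lam)
    simp only [one_apply_eq_self, hn] at h1
    refine h1.congr_deriv ?_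
    have h3 : ω (E t (R f)) = S (E t f) := by rw [hSSx, hSEx, hSRx]
    rw [h3]
    simp only [inner_neg_left, inner_neg_right, Complex.neg_re]
    rw [sw S hS, ← sw S hS (E t (R f)), hSEx t (R f), hSRx, hn]
    ring
  have hφ : ∀ t, HasDerivAt (fun t => ∑ i ∈ s, (⟪E t (R (e i)), D (E t (R (e i)))⟫_ℂ).re)
      (∑ i ∈ s, ((⟪E t (R (e i)), D (-(ω (E t (R (e i)))))⟫_ℂ).re
        + (⟪-(ω (E t (R (e i)))), D (E t (R (e i)))⟫_ℂ).re)) t := by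
    intro t
    exact HasDerivAt.fun_sum fun i _ => tb_deriv D _ _ t (hE t (R (e i)))
  have hin : ∀ t i, ⟪S f, E t (R (e i))⟫_ℂ = ⟪E t f, e i⟫_ℂ := by
    intro t i
    rw [sw S hS, hSEx, hSRx, sw _ (hEsa t)]
  have hm := monotone_of_hasDerivAt_nonneg (fun t => (hφ t).sub (hψ t)) (fun t => by
    have h1 : -(∑ i ∈ s, ((⟪E t (R (e i)), D (-(ω (E t (R (e i)))))⟫_ℂ).re
        + (⟪-(ω (E t (R (e i)))), D (E t (R (e i)))⟫_ℂ).re)) ≤ 4 * lam * ‖E t f‖ ^ 2 := by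
      calc _ ≤ ∑ i ∈ s, 4 * lam * ‖⟪S f, E t (R (e i))⟫_ℂ‖ ^ 2 := by
            rw [← Finset.sum_neg_distrib]
            exact Finset.sum_le_sum fun i _ => hlx _
        _ = 4 * lam * ∑ i ∈ s, ‖⟪e i, E t f⟫_ℂ‖ ^ 2 := by
            rw [Finset.mul_sum]
            refine Finset.sum_congr rfl fun i _ => ?_
            rw [hin, norm_inner_symm]
        _ ≤ _ := by
            gcongr
            exact he.sum_inner_products_le _
    simp only [Pi.zero_apply]
    linarith)
  have hlim : Filter.Tendsto (fun t => ∑ i ∈ s, (⟪E t (R (e i)), D (E t (R (e i)))⟫_ℂ).re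
      - 2 * lam * ‖E t (R f)‖ ^ 2) Filter.atTop (nhds 0) := by
    have hd : ∀ x, Filter.Tendsto (fun t => E t x) Filter.atTop (nhds 0) :=
      fun x => tb_decay ω hω1 hω _ (fun t => hE t x)
    have h1 : Filter.Tendsto (fun t => ∑ i ∈ s, (⟪E t (R (e i)), D (E t (R (e i)))⟫_ℂ).re)
        Filter.atTop (nhds (∑ i ∈ s, (⟪(0 : H), D 0⟫_ℂ).re)) := by
      refine tendsto_finsetSum _ fun i _ => ?_
      exact (Complex.continuous_re.tendsto _).comp
        ((hd _).inner ((D.continuous.tendsto _).comp (hd _)))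
    have h2 := ((hd (R f)).norm.pow 2).const_mul (2 * lam)
    simpa using h1.sub h2
  have := hm.ge_of_tendsto hlim 0
  simp [hE0] at this
  linarith

theorem trace_bounds_bogoliubov
    {H : Type*} [NormedAddCommGroup H] [InnerProductSpace ℂ H] [CompleteSpace H]
    {ι : Type*}
    (ω : H →L[ℂ] H) (hω : IsSelfAdjoint ω) (hω1 : (1 : H →L[ℂ] H) ≤ ω)
    (f : H) (lam : ℝ) (hlam : 0 ≤ lam)
    (g : H) (hg : g = CFC.sqrt ω f)
    (ξ : H →L[ℂ] H) (hξ : ξ = CFC.sqrt (ω ^ 2 + (4 * lam) • rankOne g))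
    (e : HilbertBasis ι ℂ H) :
    0 ≤ Ring.inverse (CFC.sqrt ω) * ξ * Ring.inverse (CFC.sqrt ω) - 1 ∧
    0 ≤ 1 - CFC.sqrt ω * Ring.inverse ξ * CFC.sqrt ω ∧
    ∑' i, ENNReal.ofReal
        (⟪e i, (Ring.inverse (CFC.sqrt ω) * ξ * Ring.inverse (CFC.sqrt ω) - 1) (e i)⟫_ℂ).re ≤
      ENNReal.ofReal (2 * lam * ‖(Ring.inverse (CFC.sqrt ω)) f‖ ^ 2) ∧
    ∑' i, ENNReal.ofReal
        (⟪e i, (1 - CFC.sqrt ω * Ring.inverse ξ * CFC.sqrt ω) (e i)⟫_ℂ).re ≤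
      ENNReal.ofReal (2 * lam * ‖(Ring.inverse (CFC.sqrt ω)) f‖ ^ 2) := by
  have h01 : (0 : H →L[ℂ] H) ≤ 1 := zero_le_one
  have hω0 : 0 ≤ ω := h01.trans hω1
  have hωu : IsUnit ω := CStarAlgebra.isUnit_of_le 1 hω1
  have hT0 : 0 ≤ (4 * lam) • rankOne g := by
    refine smul_nonneg (by positivity) ?_
    rw [ContinuousLinearMap.nonneg_iff_isPositive]
    exact InnerProductSpace.isPositive_rankOne_self g
  have hle : ω ^ 2 ≤ ω ^ 2 + (4 * lam) • rankOne g := le_add_of_nonneg_right hT0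
  have hω2 : 0 ≤ ω ^ 2 := hω.sq_nonneg
  have hωξ : ω ≤ ξ := by
    have := CFC.sqrt_le_sqrt _ _ hle
    rwa [CFC.sqrt_sq ω hω0, ← hξ] at this
  have hξ0 : 0 ≤ ξ := hω0.trans hωξ
  have hξu : IsUnit ξ := CStarAlgebra.isUnit_of_le 1 (hω1.trans hωξ)
  have hξξ : ξ * ξ = ω ^ 2 + (4 * lam) • rankOne g := by
    rw [hξ]; exact CFC.sqrt_mul_sqrt_self _ (hω2.trans hle)
  have hSu : IsUnit (CFC.sqrt ω) := (CFC.isUnit_sqrt_iff ω hω0).2 hωu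
  have hSS : CFC.sqrt ω * CFC.sqrt ω = ω := CFC.sqrt_mul_sqrt_self ω hω0
  have hS0 : 0 ≤ CFC.sqrt ω := CFC.sqrt_nonneg ω
  subst hg
  set S := CFC.sqrt ω with hSdef
  have hSsa : IsSelfAdjoint S := IsSelfAdjoint.of_nonneg hS0
  have hSR := Ring.mul_inverse_cancel S hSu
  have hRS := Ring.inverse_mul_cancel S hSu
  have hξX := Ring.mul_inverse_cancel ξ hξu
  have hXξ := Ring.inverse_mul_cancel ξ hξu
  set R := Ring.inverse S with hRdef
  set X := Ring.inverse ξ with hXdef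
  have hRsa : IsSelfAdjoint R := by
    have h1 : star R * S = 1 := by
      have := congrArg star hSR
      rwa [star_mul, hSsa.star_eq, star_one] at this
    calc star R = star R * (S * R) := by rw [hSR, mul_one]
      _ = R := by rw [← mul_assoc, h1, one_mul]
  have hξsa : IsSelfAdjoint ξ := IsSelfAdjoint.of_nonneg hξ0
  have hXsa : IsSelfAdjoint X := by
    have h1 : star X * ξ = 1 := by
      have := congrArg star hξX
      rwa [star_mul, hξsa.star_eq, star_one] at this
    calc star X = star X * (ξ * X) := by rw [hξX, mul_one]
      _ = X := by rw [← mul_assoc, h1, one_mul]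
  have hX0 : 0 ≤ X := by
    have := star_left_conjugate_nonneg hξ0 X
    rwa [hXsa.star_eq, hXξ, one_mul] at this
  have hRωR : R * ω * R = 1 := by
    rw [← hSS, ← mul_assoc R, hRS, one_mul, hSR]
  have hA : R * ξ * R - 1 = R * (ξ - ω) * R := by
    rw [mul_sub, sub_mul, hRωR]
  have hA0 : 0 ≤ R * ξ * R - 1 := by
    have := star_left_conjugate_nonneg (sub_nonneg.2 hωξ) R
    rwa [hRsa.star_eq, ← hA] at this
  set M := R * ξ * R with hM
  set N := S * X * S with hN
  have hN0 : 0 ≤ N := by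
    have := star_left_conjugate_nonneg hX0 S
    rwa [hSsa.star_eq] at this
  have hMN : M * N = 1 := by
    calc M * N = R * ξ * (R * S) * X * S := by rw [hM, hN]; simp only [mul_assoc]
      _ = 1 := by rw [hRS, mul_one, mul_assoc R, hξX, mul_one, hRS]
  have hNM : N * M = 1 := by
    calc N * M = S * X * (S * R) * ξ * R := by rw [hM, hN]; simp only [mul_assoc]
      _ = 1 := by rw [hSR, mul_one, mul_assoc S, hXξ, mul_one, hSR]
  have hNsa : IsSelfAdjoint N := IsSelfAdjoint.of_nonneg hN0
  have hAsa : IsSelfAdjoint (M - 1) := IsSelfAdjoint.of_nonneg hA0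
  have hB0 : 0 ≤ 1 - N := by
    have h1 := star_left_conjugate_nonneg hA0 N
    have h2 := star_mul_self_nonneg (1 - N)
    rw [hNsa.star_eq] at h1
    rw [star_sub, hNsa.star_eq, star_one] at h2
    have : 1 - N = N * (M - 1) * N + (1 - N) * (1 - N) := by
      rw [mul_sub, hNM]; noncomm_ring
    rw [this]; exact add_nonneg h1 h2
  have hBA : 1 - N ≤ M - 1 := by
    have h1 := star_left_conjugate_nonneg hN0 (M - 1)
    rw [hAsa.star_eq] at h1
    have : (M - 1) * N * (M - 1) = (M - 1) - (1 - N) := by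
      rw [sub_mul, hMN, one_mul, mul_sub, sub_mul, hNM]; noncomm_ring
    rw [this] at h1
    exact sub_nonneg.1 h1
  have hposA : ∀ x, 0 ≤ (⟪x, (M - 1) x⟫_ℂ).re := fun x =>
    ((ContinuousLinearMap.nonneg_iff_isPositive _).1 hA0).re_inner_nonneg_right x
  have hcmp : ∀ x, (⟪x, (1 - N) x⟫_ℂ).re ≤ (⟪x, (M - 1) x⟫_ℂ).re := fun x => by
    have := ((ContinuousLinearMap.le_def _ _).1 hBA).re_inner_nonneg_right x
    change 0 ≤ (⟪x, (M - 1) x - (1 - N) x⟫_ℂ).re at this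
    rw [inner_sub_right, Complex.sub_re] at this
    linarith
  have hAx : ∀ x, (⟪x, (M - 1) x⟫_ℂ).re = (⟪R x, (ξ - ω) (R x)⟫_ℂ).re := fun x => by
    rw [hA]
    have := (ContinuousLinearMap.isSelfAdjoint_iff_isSymmetric.1 hRsa) x ((ξ - ω) (R x))
    exact (congrArg Complex.re this).symm
  have hD : IsSelfAdjoint (ξ - ω) := hξsa.sub hω
  have hly : ω * (ξ - ω) + (ξ - ω) * ω + (ξ - ω) * (ξ - ω) = (4 * lam) • rankOne (S f) := by
    have : ω * (ξ - ω) + (ξ - ω) * ω + (ξ - ω) * (ξ - ω) = ξ * ξ - ω ^ 2 := by noncomm_ring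
    rw [this, hξξ, add_sub_cancel_left]
  have main : ∑' i, ENNReal.ofReal (⟪e i, (M - 1) (e i)⟫_ℂ).re ≤
      ENNReal.ofReal (2 * lam * ‖R f‖ ^ 2) := by
    rw [ENNReal.tsum_eq_iSup_sum]
    refine iSup_le fun s => ?_
    rw [← ENNReal.ofReal_sum_of_nonneg fun i _ => hposA _]
    refine ENNReal.ofReal_le_ofReal ?_
    simp only [hAx]
    exact tb_key ω (ξ - ω) S R hω hω1 hD hSsa hRsa hSS hSR hRS f lam hlam hly e e.orthonormal s
  refine ⟨hA0, hB0, main, le_trans (ENNReal.tsum_le_tsum fun i => ?_) main⟩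
  exact ENNReal.ofReal_le_ofReal (hcmp _)
end

section
/- Let H be a complex Hilbert space, ω a bounded self-adjoint operator on H with ω ≥ Id, f ∈ H and λ ≥ 0. Set g = ω^{1/2}f and ξ = (ω² + 4λ|g⟩⟨g|)^{1/2}. Then for every Hilbert (orthonormal) basis (e_i) of H one has ∑_i ‖(ω^{-1/2}ξ^{1/2} − Id) e_i‖² ≤ 16λ²‖ω^{-1/2}f‖⁴ and ∑_i ‖(ω^{1/2}ξ^{-1/2} − Id) e_i‖² ≤ 16λ²‖ω^{-1/2}f‖⁴. -/
open scoped InnerProductSpace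
open MeasureTheory
set_option synthInstance.maxHeartbeats 1000000
set_option maxHeartbeats 1000000

set_option linter.unusedSectionVars false
open Filter Topology
section HS
variable {H : Type*} [NormedAddCommGroup H] [InnerProductSpace ℂ H] [CompleteSpace H]
  {ι : Type*}

/-- Hilbert–Schmidt with respect to a fixed basis. -/
def IsHS (e : HilbertBasis ι ℂ H) (T : H →L[ℂ] H) : Prop :=
  Memℓp (fun i => T (e i)) 2

/-- The family `(T eᵢ)` as an element of `ℓ²(ι, H)`. -/
noncomputable def hsJ (e : HilbertBasis ι ℂ H) (T : H →L[ℂ] H) (h : IsHS e T) :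
    lp (fun _ : ι => H) 2 := ⟨fun i => T (e i), h⟩

/-- squared Hilbert–Schmidt norm -/
noncomputable def hsN (e : HilbertBasis ι ℂ H) (T : H →L[ℂ] H) : ENNReal :=
  ∑' i, ENNReal.ofReal (‖T (e i)‖ ^ 2)

lemma isHS_iff_summable (e : HilbertBasis ι ℂ H) (T : H →L[ℂ] H) :
    IsHS e T ↔ Summable fun i => ‖T (e i)‖ ^ 2 := by
  unfold IsHS
  rw [memℓp_gen_iff (by norm_num)]
  simp

lemma isHS_iff_ne_top (e : HilbertBasis ι ℂ H) (T : H →L[ℂ] H) :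
    IsHS e T ↔ hsN e T ≠ ⊤ := by
  rw [isHS_iff_summable, hsN]
  constructor
  · intro h
    exact h.tsum_ofReal_ne_top
  · intro h
    have := ENNReal.summable_toReal h
    refine this.congr fun i => ?_
    rw [ENNReal.toReal_ofReal (by positivity)]

lemma hsN_eq (e : HilbertBasis ι ℂ H) (T : H →L[ℂ] H) (h : IsHS e T) :
    hsN e T = ENNReal.ofReal (‖hsJ e T h‖ ^ 2) := by
  have h1 := lp.norm_rpow_eq_tsum (p := 2) (by norm_num) (hsJ e T h)
  have h2 : ‖hsJ e T h‖ ^ 2 = ∑' i, ‖T (e i)‖ ^ 2 := by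
    simpa [hsJ] using h1
  rw [h2, ENNReal.ofReal_tsum_of_nonneg (fun i => by positivity) ((isHS_iff_summable e T).1 h), hsN]

lemma ofReal_norm_sq_eq (e : HilbertBasis ι ℂ H) (x : H) :
    ENNReal.ofReal (‖x‖ ^ 2) = ∑' i, ENNReal.ofReal (‖⟪e i, x⟫_ℂ‖ ^ 2) := by
  have h1 := lp.norm_rpow_eq_tsum (p := 2) (by norm_num) (e.repr x)
  have h3 : Memℓp (fun i => (e.repr x) i) 2 := lp.memℓp _
  rw [memℓp_gen_iff (by norm_num)] at h3
  have h2 : ‖x‖ ^ 2 = ∑' i, ‖⟪e i, x⟫_ℂ‖ ^ 2 := by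
    simpa [e.repr_apply_apply] using h1
  rw [h2, ENNReal.ofReal_tsum_of_nonneg (fun i => by positivity)]
  simpa [e.repr_apply_apply] using h3

lemma hsN_star (e : HilbertBasis ι ℂ H) (T : H →L[ℂ] H) : hsN e (star T) = hsN e T := by
  unfold hsN
  simp_rw [ofReal_norm_sq_eq e]
  rw [ENNReal.tsum_comm]
  refine tsum_congr fun i => tsum_congr fun j => ?_
  rw [ContinuousLinearMap.star_eq_adjoint, ContinuousLinearMap.adjoint_inner_right,
    norm_inner_symm]

lemma IsHS.star {e : HilbertBasis ι ℂ H} {T : H →L[ℂ] H} (h : IsHS e T) : IsHS e (star T) := by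
  rw [isHS_iff_ne_top, hsN_star, ← isHS_iff_ne_top]; exact h

lemma hsN_mul_left (e : HilbertBasis ι ℂ H) (A T : H →L[ℂ] H) :
    hsN e (A * T) ≤ ENNReal.ofReal (‖A‖ ^ 2) * hsN e T := by
  unfold hsN
  rw [← ENNReal.tsum_mul_left]
  refine ENNReal.tsum_le_tsum fun i => ?_
  rw [← ENNReal.ofReal_mul (by positivity), ← mul_pow]
  gcongr
  exact A.le_opNorm _

lemma hsN_mul_right (e : HilbertBasis ι ℂ H) (A T : H →L[ℂ] H) :
    hsN e (T * A) ≤ ENNReal.ofReal (‖A‖ ^ 2) * hsN e T := by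
  rw [← hsN_star, star_mul, ← hsN_star e T, ← norm_star A]
  exact hsN_mul_left _ _ _

lemma IsHS.mul_left {e : HilbertBasis ι ℂ H} {T : H →L[ℂ] H} (h : IsHS e T) (A : H →L[ℂ] H) :
    IsHS e (A * T) := by
  rw [isHS_iff_ne_top] at *
  exact ne_top_of_le_ne_top (ENNReal.mul_ne_top ENNReal.ofReal_ne_top h) (hsN_mul_left e A T)

lemma IsHS.mul_right {e : HilbertBasis ι ℂ H} {T : H →L[ℂ] H} (h : IsHS e T) (A : H →L[ℂ] H) :
    IsHS e (T * A) := by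
  rw [isHS_iff_ne_top] at *
  exact ne_top_of_le_ne_top (ENNReal.mul_ne_top ENNReal.ofReal_ne_top h) (hsN_mul_right e A T)

lemma IsHS.add {e : HilbertBasis ι ℂ H} {S T : H →L[ℂ] H} (hS : IsHS e S) (hT : IsHS e T) :
    IsHS e (S + T) := Memℓp.add hS hT

lemma IsHS.smul {e : HilbertBasis ι ℂ H} {S : H →L[ℂ] H} (hS : IsHS e S) (c : ℂ) :
    IsHS e (c • S) := Memℓp.const_smul hS c

lemma hsJ_add {e : HilbertBasis ι ℂ H} {S T : H →L[ℂ] H} (hS : IsHS e S) (hT : IsHS e T) :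
    hsJ e (S + T) (hS.add hT) = hsJ e S hS + hsJ e T hT := rfl

lemma hsJ_smul {e : HilbertBasis ι ℂ H} {S : H →L[ℂ] H} (hS : IsHS e S) (c : ℂ) :
    hsJ e (c • S) (hS.smul c) = c • hsJ e S hS := rfl

lemma norm_hsJ_mul_left {e : HilbertBasis ι ℂ H} {T : H →L[ℂ] H} (h : IsHS e T) (A : H →L[ℂ] H) :
    ‖hsJ e (A * T) (h.mul_left A)‖ ≤ ‖A‖ * ‖hsJ e T h‖ := by
  have := hsN_mul_left e A T
  rw [hsN_eq e _ h, hsN_eq e _ (h.mul_left A), ← ENNReal.ofReal_mul (by positivity),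
    ENNReal.ofReal_le_ofReal_iff (by positivity), ← mul_pow] at this
  exact le_of_sq_le_sq this (by positivity)

lemma norm_hsJ_mul_right {e : HilbertBasis ι ℂ H} {T : H →L[ℂ] H} (h : IsHS e T)
    (A : H →L[ℂ] H) :
    ‖hsJ e (T * A) (h.mul_right A)‖ ≤ ‖A‖ * ‖hsJ e T h‖ := by
  have := hsN_mul_right e A T
  rw [hsN_eq e _ h, hsN_eq e _ (h.mul_right A), ← ENNReal.ofReal_mul (by positivity),
    ENNReal.ofReal_le_ofReal_iff (by positivity), ← mul_pow] at this
  exact le_of_sq_le_sq this (by positivity)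

lemma norm_hsJ_star {e : HilbertBasis ι ℂ H} {T : H →L[ℂ] H} (h : IsHS e T) :
    ‖hsJ e (star T) h.star‖ = ‖hsJ e T h‖ := by
  have := hsN_star e T
  rw [hsN_eq e _ h, hsN_eq e _ h.star, ENNReal.ofReal_eq_ofReal_iff (by positivity)
    (by positivity)] at this
  exact (sq_eq_sq₀ (by positivity) (by positivity)).1 this

/-- real part of the Hilbert–Schmidt inner product -/
noncomputable def hsR (e : HilbertBasis ι ℂ H) (S T : H →L[ℂ] H) : ℝ :=
  ∑' i, (⟪S (e i), T (e i)⟫_ℂ).re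

lemma hsR_eq {e : HilbertBasis ι ℂ H} {S T : H →L[ℂ] H} (hS : IsHS e S) (hT : IsHS e T) :
    hsR e S T = (⟪hsJ e S hS, hsJ e T hT⟫_ℂ).re := by
  rw [lp.inner_eq_tsum, Complex.re_tsum (lp.summable_inner _ _)]
  rfl

lemma hsR_move_left (e : HilbertBasis ι ℂ H) (A S T : H →L[ℂ] H) :
    hsR e (star A * S) T = hsR e S (A * T) := by
  unfold hsR
  refine tsum_congr fun i => ?_
  simp [ContinuousLinearMap.star_eq_adjoint, ContinuousLinearMap.adjoint_inner_left]

lemma norm_sq_hsJ_add {e : HilbertBasis ι ℂ H} {S T : H →L[ℂ] H} (hS : IsHS e S)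
    (hT : IsHS e T) :
    ‖hsJ e (S + T) (hS.add hT)‖ ^ 2 = ‖hsJ e S hS‖ ^ 2 + 2 * hsR e S T + ‖hsJ e T hT‖ ^ 2 := by
  rw [hsJ_add hS hT, hsR_eq hS hT]
  exact norm_add_sq (𝕜 := ℂ) _ _

lemma norm_sq_hsJ_add_eq {e : HilbertBasis ι ℂ H} {S T U : H →L[ℂ] H} (hS : IsHS e S)
    (hT : IsHS e T) (hU : IsHS e U) (h : S + T = U) :
    ‖hsJ e U hU‖ ^ 2 = ‖hsJ e S hS‖ ^ 2 + 2 * hsR e S T + ‖hsJ e T hT‖ ^ 2 := by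
  subst h
  exact norm_sq_hsJ_add hS hT

lemma hsR_star {e : HilbertBasis ι ℂ H} {S T : H →L[ℂ] H} (hS : IsHS e S) (hT : IsHS e T) :
    hsR e (star S) (star T) = hsR e S T := by
  have h1 := norm_sq_hsJ_add hS hT
  have h2 := norm_sq_hsJ_add hS.star hT.star
  have h3 := norm_hsJ_star (hS.add hT)
  simp only [star_add] at h3
  rw [h3, norm_hsJ_star hS, norm_hsJ_star hT] at h2
  linarith

lemma hsR_move_right {e : HilbertBasis ι ℂ H} {S T : H →L[ℂ] H} (hS : IsHS e S) (hT : IsHS e T)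
    (A : H →L[ℂ] H) : hsR e (S * A) T = hsR e S (T * star A) := by
  rw [← hsR_star (hS.mul_right A) hT, ← hsR_star hS (hT.mul_right _), star_mul, star_mul,
    star_star, hsR_move_left]

lemma hsR_self {e : HilbertBasis ι ℂ H} {S : H →L[ℂ] H} (hS : IsHS e S) :
    hsR e S S = ‖hsJ e S hS‖ ^ 2 := by
  rw [hsR_eq hS hS]
  exact (norm_sq_eq_re_inner (𝕜 := ℂ) _).symm

lemma norm_sub_le_aux (a : H →L[ℂ] H) (h1 : 1 ≤ a) (c : ℝ) (hc : ‖a‖ ≤ c) (hc1 : 1 ≤ c) :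
    ‖algebraMap ℝ (H →L[ℂ] H) c - a‖ ≤ c - 1 := by
  have ha : 0 ≤ a := zero_le_one.trans h1
  have h2 : a ≤ algebraMap ℝ (H →L[ℂ] H) c :=
    (CStarAlgebra.norm_le_iff_le_algebraMap a (by linarith) ha).1 hc
  rw [CStarAlgebra.norm_le_iff_le_algebraMap _ (by linarith) (sub_nonneg.2 h2), map_sub, map_one]
  exact sub_le_sub_left h1 _

/-- Solutions of a Sylvester equation with Hilbert–Schmidt right-hand side are
Hilbert–Schmidt. -/
lemma isHS_sylvester (e : HilbertBasis ι ℂ H) (a b X R : H →L[ℂ] H) (ha : 1 ≤ a) (hb : 1 ≤ b)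
    (hR : IsHS e R) (h : a * X + X * b = R) : IsHS e X := by
  obtain ⟨c, hc1, hca, hcb⟩ : ∃ c : ℝ, 1 ≤ c ∧ ‖a‖ ≤ c ∧ ‖b‖ ≤ c :=
    ⟨max 1 (max ‖a‖ ‖b‖), by simp, by simp, by simp⟩
  have hna := norm_sub_le_aux a ha c hca hc1
  have hnb := norm_sub_le_aux b hb c hcb hc1
  set a' := algebraMap ℝ (H →L[ℂ] H) c - a with ha'
  set b' := algebraMap ℝ (H →L[ℂ] H) c - b with hb'
  set d : ℂ := (((2 * c)⁻¹ : ℝ) : ℂ) with hd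
  have hdn : ‖d‖ = (2 * c)⁻¹ := by
    rw [hd, Complex.norm_real, Real.norm_of_nonneg (by positivity)]
  set Φ : (H →L[ℂ] H) → (H →L[ℂ] H) := fun Y => d • (R + (a' * Y + Y * b')) with hΦ
  have hX : Φ X = X := by
    have h1 : R + (a' * X + X * b') = (2 * c : ℂ) • X := by
      rw [← h, ha', hb', sub_mul, mul_sub, Algebra.algebraMap_eq_smul_one]
      simp only [smul_mul_assoc, mul_smul_comm, one_mul, mul_one]
      rw [mul_smul, two_smul, Complex.coe_smul]
      abel
    simp only [hΦ]
    rw [h1, smul_smul, hd]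
    have : (((2 * c)⁻¹ : ℝ) : ℂ) * (2 * c) = 1 := by
      have : (c : ℂ) ≠ 0 := by exact_mod_cast (by linarith : c ≠ 0)
      push_cast
      field_simp
    rw [this, one_smul]
  set k : ℝ := (c - 1) / c with hk
  have hk0 : 0 ≤ k := div_nonneg (by linarith) (by linarith)
  have hk1 : k < 1 := by rw [hk, div_lt_one (by linarith)]; linarith
  have hkc : (2 * c)⁻¹ * ((c - 1) + (c - 1)) = k := by
    rw [hk]; field_simp; ring
  have hcontr : ∀ Y, ‖X - Φ Y‖ ≤ k * ‖X - Y‖ := by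
    intro Y
    have h1 : X - Φ Y = d • (a' * (X - Y) + (X - Y) * b') := by
      conv_lhs => rw [← hX]
      simp only [hΦ]
      rw [← smul_sub, mul_sub a' X Y, sub_mul X Y b']
      congr 1
      abel
    rw [h1, norm_smul, hdn, ← hkc, mul_assoc]
    gcongr
    calc ‖a' * (X - Y) + (X - Y) * b'‖ ≤ ‖a'‖ * ‖X - Y‖ + ‖X - Y‖ * ‖b'‖ :=
          (norm_add_le _ _).trans (add_le_add (norm_mul_le _ _) (norm_mul_le _ _))
      _ ≤ (c - 1) * ‖X - Y‖ + ‖X - Y‖ * (c - 1) := by gcongr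
      _ = _ := by ring
  set C : ℝ := ‖hsJ e R hR‖ / 2 with hC
  have hstep : ∀ Y, (∃ hY : IsHS e Y, ‖hsJ e Y hY‖ ≤ C) →
      ∃ hY : IsHS e (Φ Y), ‖hsJ e (Φ Y) hY‖ ≤ C := by
    rintro Y ⟨hY, hYC⟩
    refine ⟨(hR.add ((hY.mul_left a').add (hY.mul_right b'))).smul d, ?_⟩
    simp only [hΦ]
    rw [hsJ_smul (hR.add ((hY.mul_left a').add (hY.mul_right b'))), hsJ_add hR ((hY.mul_left a').add (hY.mul_right b')),
      hsJ_add (hY.mul_left a') (hY.mul_right b'), norm_smul, hdn]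
    calc (2 * c)⁻¹ * ‖hsJ e R hR + (hsJ e (a' * Y) (hY.mul_left a') +
            hsJ e (Y * b') (hY.mul_right b'))‖
        ≤ (2 * c)⁻¹ * (‖hsJ e R hR‖ + (‖a'‖ * ‖hsJ e Y hY‖ + ‖b'‖ * ‖hsJ e Y hY‖)) := by
          gcongr
          refine (norm_add_le _ _).trans (add_le_add le_rfl ?_)
          exact (norm_add_le _ _).trans
            (add_le_add (norm_hsJ_mul_left hY a') (norm_hsJ_mul_right hY b'))
      _ ≤ (2 * c)⁻¹ * (2 * C + ((c - 1) * C + (c - 1) * C)) := by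
          have : ‖hsJ e R hR‖ = 2 * C := by rw [hC]; ring
          rw [this]
          have : 0 ≤ c - 1 := by linarith
          gcongr
      _ = C := by field_simp; ring
  have hz : ∃ hY : IsHS e (0 : H →L[ℂ] H), ‖hsJ e 0 hY‖ ≤ C := by
    refine ⟨zero_memℓp, ?_⟩
    have : hsJ e (0 : H →L[ℂ] H) zero_memℓp = 0 := rfl
    rw [this, norm_zero]
    positivity
  have hit : ∀ n, ∃ hY : IsHS e (Φ^[n] 0), ‖hsJ e (Φ^[n] 0) hY‖ ≤ C := by
    intro n
    induction n with
    | zero => exact hz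
    | succ n ih => rw [Function.iterate_succ_apply']; exact hstep _ ih
  have hconv : ∀ n, ‖X - Φ^[n] 0‖ ≤ k ^ n * ‖X‖ := by
    intro n
    induction n with
    | zero => simp
    | succ n ih =>
      rw [Function.iterate_succ_apply', pow_succ']
      calc _ ≤ _ := hcontr _
        _ ≤ k * (k ^ n * ‖X‖) := by gcongr
        _ = _ := by ring
  have hlim : Tendsto (fun n => Φ^[n] 0) atTop (𝓝 X) := by
    rw [tendsto_iff_norm_sub_tendsto_zero]
    refine squeeze_zero (fun n => norm_nonneg _)
      (fun n => (norm_sub_rev _ _).trans_le (hconv n)) ?_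
    simpa using (tendsto_pow_atTop_nhds_zero_of_lt_one hk0 hk1).mul_const ‖X‖
  have hpt : ∀ x, Tendsto (fun n => (Φ^[n] 0) x) atTop (𝓝 (X x)) := fun x =>
    ((ContinuousLinearMap.apply ℂ H x).continuous.tendsto X).comp hlim
  refine memℓp_gen' (C := C ^ (2 : ENNReal).toReal) fun s => ?_
  refine lp.sum_rpow_le_of_tendsto (p := 2) (l := atTop) (by norm_num)
    (F := fun n => hsJ e (Φ^[n] 0) (hit n).choose)
    (Eventually.of_forall fun n => (hit n).choose_spec) ?_ s
  rw [tendsto_pi_nhds]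
  exact fun i => hpt (e i)

/-- The key algebraic estimate. -/
lemma hs_core (e : HilbertBasis ι ℂ H) (a b ai bi R : H →L[ℂ] H) (ha : 1 ≤ a) (hb : 1 ≤ b)
    (ha2 : 1 ≤ a * a) (hb2 : 1 ≤ b * b)
    (h2 : ai * a = 1) (h3 : b * bi = 1)
    (hai : 0 ≤ ai) (hbi : 0 ≤ bi) (hR : IsHS e R)
    (h : b * b * (b * b) - a * a * (a * a) = R) :
    hsN e (ai * b - 1) ≤ hsN e (ai * ai * R * (bi * bi)) ∧
    hsN e (a * bi - 1) ≤ hsN e (ai * ai * R * (bi * bi)) := by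
  set E := b * b - a * a with hE
  set D := b - a with hD
  have hEHS : IsHS e E := by
    refine isHS_sylvester e (a * a) (b * b) E R ha2 hb2 hR ?_
    rw [← h, hE]; noncomm_ring
  have hDHS : IsHS e D := by
    refine isHS_sylvester e a b D E ha hb hEHS ?_
    rw [hE, hD]; noncomm_ring
  have sai : star ai = ai := hai.isSelfAdjoint
  have sbi : star bi = bi := hbi.isSelfAdjoint
  -- first step
  set W := ai * E * bi with hW
  have hWHS : IsHS e W := (hEHS.mul_left ai).mul_right bi
  have eW : ai * D + D * bi = W := by
    have : ai * (a * D + D * b) * bi = W := by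
      rw [hW]; congr 2; rw [hE, hD]; noncomm_ring
    rw [← this, mul_add, add_mul, ← mul_assoc, h2, one_mul, mul_assoc ai, mul_assoc D, h3,
      mul_one, add_comm]
  have hpos1 : 0 ≤ hsR e (ai * D) (D * bi) := by
    set p := CFC.sqrt ai
    set q := CFC.sqrt bi
    have hp : p * p = ai := CFC.sqrt_mul_sqrt_self ai hai
    have hq : q * q = bi := CFC.sqrt_mul_sqrt_self bi hbi
    have sp : star p = p := (CFC.sqrt_nonneg ai).isSelfAdjoint
    have sq : star q = q := (CFC.sqrt_nonneg bi).isSelfAdjoint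
    have hpD := hDHS.mul_left p
    have : hsR e (ai * D) (D * bi) = hsR e (p * D * q) (p * D * q) := by
      rw [hsR_move_right hpD (hpD.mul_right q), sq, mul_assoc (p * D) q q, hq, mul_assoc p D bi,
        ← hsR_move_left e p, sp, ← mul_assoc, hp]
    rw [this, hsR_self (hpD.mul_right q)]
    positivity
  -- second step
  have eY : E * (bi * bi) + ai * ai * E = ai * ai * R * (bi * bi) := by
    have e1 : a * a * E + E * (b * b) = R := by rw [← h, hE]; noncomm_ring
    have e2 : ai * ai * (a * a) = 1 := by
      rw [mul_assoc, ← mul_assoc ai a a, h2, one_mul, h2]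
    have e3 : b * b * (bi * bi) = 1 := by
      rw [mul_assoc, ← mul_assoc b bi bi, h3, one_mul, h3]
    rw [← e1, mul_add, add_mul, ← mul_assoc (ai * ai), e2, one_mul, mul_assoc (ai * ai),
      mul_assoc E, e3, mul_one]
  have hcross : hsR e (E * (bi * bi)) (ai * ai * E) = ‖hsJ e W hWHS‖ ^ 2 := by
    rw [← hsR_self hWHS, ← mul_assoc E, hsR_move_right (hEHS.mul_right bi) (hEHS.mul_left _), sbi,
      mul_assoc ai ai E, mul_assoc ai (ai * E) bi, ← hsR_move_left e ai, sai, ← mul_assoc]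
  have hT : IsHS e (ai * ai * R * (bi * bi)) := (hR.mul_left _).mul_right _
  have k1 := norm_sq_hsJ_add_eq (hDHS.mul_left ai) (hDHS.mul_right bi) hWHS eW
  have k2 := norm_sq_hsJ_add_eq (hEHS.mul_right (bi * bi)) (hEHS.mul_left (ai * ai)) hT eY
  have e5 : ai * b - 1 = ai * D := by rw [hD, mul_sub, h2]
  have e6 : a * bi - 1 = (-1 : ℂ) • (D * bi) := by rw [hD, sub_mul, h3]; simp
  constructor
  · rw [e5, hsN_eq e _ (hDHS.mul_left ai), hsN_eq e _ hT]
    apply ENNReal.ofReal_le_ofReal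
    have m1 := sq_nonneg ‖hsJ e _ (hEHS.mul_right (bi * bi))‖
    have m2 := sq_nonneg ‖hsJ e _ (hEHS.mul_left (ai * ai))‖
    have m3 := sq_nonneg ‖hsJ e _ (hDHS.mul_right bi)‖
    have m4 := sq_nonneg ‖hsJ e W hWHS‖
    rw [hcross] at k2
    linarith
  · rw [e6, hsN_eq e _ ((hDHS.mul_right bi).smul (-1)), hsJ_smul (hDHS.mul_right bi), norm_smul, norm_neg, norm_one,
      one_mul, hsN_eq e _ hT]
    apply ENNReal.ofReal_le_ofReal
    have m1 := sq_nonneg ‖hsJ e _ (hEHS.mul_right (bi * bi))‖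
    have m2 := sq_nonneg ‖hsJ e _ (hEHS.mul_left (ai * ai))‖
    have m3 := sq_nonneg ‖hsJ e _ (hDHS.mul_left ai)‖
    have m4 := sq_nonneg ‖hsJ e W hWHS‖
    rw [hcross] at k2
    linarith

end HS

section aux
variable {H : Type*} [NormedAddCommGroup H] [InnerProductSpace ℂ H] [CompleteSpace H]
  {ι : Type*}

lemma one_le_mul_self_aux (a : H →L[ℂ] H) (h : 1 ≤ a) : 1 ≤ a * a := by
  have h0 : 0 ≤ a - 1 := sub_nonneg.2 h
  have h1 : 0 ≤ (a - 1) * (a - 1) := by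
    have := star_mul_self_nonneg (a - 1)
    rwa [h0.isSelfAdjoint.star_eq] at this
  rw [← sub_nonneg]
  have : a * a - 1 = (a - 1) * (a - 1) + ((a - 1) + (a - 1)) := by noncomm_ring
  rw [this]
  exact add_nonneg h1 (add_nonneg h0 h0)

lemma hsN_rank_one (e : HilbertBasis ι ℂ H) (T : H →L[ℂ] H) (u v : H)
    (h : ∀ x, T x = ⟪u, x⟫_ℂ • v) : hsN e T = ENNReal.ofReal (‖u‖ ^ 2 * ‖v‖ ^ 2) := by
  rw [ENNReal.ofReal_mul (by positivity), ofReal_norm_sq_eq e, ← ENNReal.tsum_mul_right, hsN]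
  refine tsum_congr fun i => ?_
  rw [h, norm_smul, mul_pow, ENNReal.ofReal_mul (by positivity), norm_inner_symm]

lemma rankOne_nonneg_aux (g : H) : 0 ≤ rankOne g := by
  rw [ContinuousLinearMap.nonneg_iff_isPositive]
  rw [ContinuousLinearMap.isPositive_iff_complex]
  intro x
  have : ⟪rankOne g x, x⟫_ℂ = ((‖⟪g, x⟫_ℂ‖ ^ 2 : ℝ) : ℂ) := by
    simp only [rankOne, ContinuousLinearMap.smulRight_apply, innerSL_apply_apply, inner_smul_left]
    rw [RCLike.conj_mul]
    norm_cast
  rw [this]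
  refine ⟨by rw [RCLike.re_eq_complex_re, Complex.ofReal_re], ?_⟩
  rw [RCLike.re_eq_complex_re, Complex.ofReal_re]
  positivity

lemma norm_le_of_sq_le_aux (c d : H →L[ℂ] H) (hc : IsSelfAdjoint c) (hd : IsSelfAdjoint d)
    (h : c * c ≤ d * d) (x : H) : ‖c x‖ ≤ ‖d x‖ := by
  rw [ContinuousLinearMap.le_def, ContinuousLinearMap.isPositive_iff_complex] at h
  have h1 := (h x).2
  have key : ∀ t : H →L[ℂ] H, IsSelfAdjoint t → ⟪(t * t) x, x⟫_ℂ = ((‖t x‖ ^ 2 : ℝ) : ℂ) := by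
    intro t ht
    have : ⟪(t * t) x, x⟫_ℂ = ⟪t x, t x⟫_ℂ := by
      rw [mul_apply_eq_comp]
      conv_lhs => rw [← ht.star_eq, ContinuousLinearMap.star_eq_adjoint,
        ContinuousLinearMap.adjoint_inner_left]
      rw [← ContinuousLinearMap.star_eq_adjoint, ht.star_eq]
    rw [this, inner_self_eq_norm_sq_to_K]
    norm_cast
  rw [sub_apply, inner_sub_left, key c hc, key d hd,
    RCLike.re_eq_complex_re, ← Complex.ofReal_sub, Complex.ofReal_re] at h1
  exact le_of_sq_le_sq (by linarith) (norm_nonneg _)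

end aux

/-- Hilbert–Schmidt bounds of Lemma 6.7: for `ω ≥ Id` self-adjoint, `f ∈ H`, `λ ≥ 0`,
`g = ω^{1/2}f` and `ξ = (ω² + 4λ|g⟩⟨g|)^{1/2}`, for every Hilbert basis `(e i)` one has
`∑ᵢ ‖(ω^{-1/2}ξ^{1/2} − Id) e i‖² ≤ 16λ²‖ω^{-1/2}f‖⁴` and
`∑ᵢ ‖(ω^{1/2}ξ^{-1/2} − Id) e i‖² ≤ 16λ²‖ω^{-1/2}f‖⁴`. -/
theorem hilbert_schmidt_bounds_bogoliubov
    {H : Type*} [NormedAddCommGroup H] [InnerProductSpace ℂ H] [CompleteSpace H]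
    {ι : Type*}
    (ω : H →L[ℂ] H) (hω : IsSelfAdjoint ω) (hω1 : (1 : H →L[ℂ] H) ≤ ω)
    (f : H) (lam : ℝ) (hlam : 0 ≤ lam)
    (g : H) (hg : g = CFC.sqrt ω f)
    (ξ : H →L[ℂ] H) (hξ : ξ = CFC.sqrt (ω ^ 2 + (4 * lam) • rankOne g))
    (e : HilbertBasis ι ℂ H) :
    ∑' i, ENNReal.ofReal (‖(Ring.inverse (CFC.sqrt ω) * CFC.sqrt ξ - 1) (e i)‖ ^ 2) ≤
        ENNReal.ofReal (16 * lam ^ 2 * ‖(Ring.inverse (CFC.sqrt ω)) f‖ ^ 4) ∧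
    ∑' i, ENNReal.ofReal (‖(CFC.sqrt ω * Ring.inverse (CFC.sqrt ξ) - 1) (e i)‖ ^ 2) ≤
        ENNReal.ofReal (16 * lam ^ 2 * ‖(Ring.inverse (CFC.sqrt ω)) f‖ ^ 4) := by
  set a := CFC.sqrt ω with ha_def
  set b := CFC.sqrt ξ with hb_def
  set R : H →L[ℂ] H := (4 * lam) • rankOne g with hR_def
  have hR0 : 0 ≤ R := smul_nonneg (by positivity) (rankOne_nonneg_aux g)
  have hω0 : 0 ≤ ω := zero_le_one.trans hω1
  have hω2 : 1 ≤ ω ^ 2 := by rw [pow_two]; exact one_le_mul_self_aux ω hω1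
  have hB1 : ω ^ 2 ≤ ω ^ 2 + R := le_add_of_nonneg_right hR0
  have hB0 : 0 ≤ ω ^ 2 + R := zero_le_one.trans (hω2.trans hB1)
  have hξ1 : 1 ≤ ξ := by
    rw [hξ, ← CFC.sqrt_one (A := H →L[ℂ] H)]
    exact CFC.sqrt_le_sqrt _ _ (hω2.trans hB1)
  have hξ0 : 0 ≤ ξ := zero_le_one.trans hξ1
  have ha1 : 1 ≤ a := by
    rw [ha_def, ← CFC.sqrt_one (A := H →L[ℂ] H)]
    exact CFC.sqrt_le_sqrt _ _ hω1
  have hb1 : 1 ≤ b := by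
    rw [hb_def, ← CFC.sqrt_one (A := H →L[ℂ] H)]
    exact CFC.sqrt_le_sqrt _ _ hξ1
  have haa : a * a = ω := CFC.sqrt_mul_sqrt_self ω hω0
  have hbb : b * b = ξ := CFC.sqrt_mul_sqrt_self ξ hξ0
  have hξξ : ξ * ξ = ω ^ 2 + R := by rw [hξ]; exact CFC.sqrt_mul_sqrt_self _ hB0
  have ua : IsUnit a := CStarAlgebra.isUnit_of_le 1 ha1
  have ub : IsUnit b := CStarAlgebra.isUnit_of_le 1 hb1
  obtain ⟨A, hA⟩ := ua
  obtain ⟨B, hB⟩ := ub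
  have ha0 : 0 ≤ a := zero_le_one.trans ha1
  have hb0 : 0 ≤ b := zero_le_one.trans hb1
  rw [← hA, ← hB, Ring.inverse_unit, Ring.inverse_unit]
  have hAi0 : 0 ≤ ((A⁻¹ : (H →L[ℂ] H)ˣ) : H →L[ℂ] H) :=
    CFC.inv_nonneg_of_nonneg A (by rw [hA]; exact ha0)
  have hBi0 : 0 ≤ ((B⁻¹ : (H →L[ℂ] H)ˣ) : H →L[ℂ] H) :=
    CFC.inv_nonneg_of_nonneg B (by rw [hB]; exact hb0)
  set ai : H →L[ℂ] H := ((A⁻¹ : (H →L[ℂ] H)ˣ) : H →L[ℂ] H) with hai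
  set bi : H →L[ℂ] H := ((B⁻¹ : (H →L[ℂ] H)ˣ) : H →L[ℂ] H) with hbi
  have h2 : ai * a = 1 := by rw [← hA, hai]; exact A.inv_mul
  have h3 : b * bi = 1 := by rw [← hB, hbi]; exact B.mul_inv
  have hRx : ∀ x, R x = ⟪g, x⟫_ℂ • ((4 * lam) • g) := by
    intro x
    simp only [hR_def, rankOne, smul_apply,
      ContinuousLinearMap.smulRight_apply, innerSL_apply_apply]
    rw [smul_comm]
  have hRHS : IsHS e R := by
    rw [isHS_iff_ne_top, hsN_rank_one e R _ _ hRx]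
    exact ENNReal.ofReal_ne_top
  have hcore := hs_core e a b ai bi R ha1 hb1 (one_le_mul_self_aux a ha1)
    (one_le_mul_self_aux b hb1) h2 h3 hAi0 hBi0 hRHS (by rw [haa, hbb, hξξ, pow_two]; abel)
  have sai : IsSelfAdjoint (ai * ai) := by
    rw [isSelfAdjoint_iff, star_mul, hAi0.isSelfAdjoint.star_eq]
  have sbi : IsSelfAdjoint (bi * bi) := by
    rw [isSelfAdjoint_iff, star_mul, hBi0.isSelfAdjoint.star_eq]
  have hagf : (ai * ai) g = ai f := by
    have : (ai * ai) g = (ai * (ai * a)) f := by rw [hg]; rfl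
    rw [this, h2, mul_one]
  have hle : ‖(bi * bi) g‖ ≤ ‖ai f‖ := by
    rw [← hagf]
    refine norm_le_of_sq_le_aux _ _ sbi sai ?_ g
    have := CStarAlgebra.inv_le_inv (a := A * A * (A * A)) (b := B * B * (B * B))
      (by push_cast; rw [hA, haa, ← pow_two]; exact zero_le_one.trans hω2)
      (by push_cast; rw [hA, hB, haa, hbb, hξξ, ← pow_two]; exact hB1)
    simpa [mul_inv_rev] using this
  have hN : hsN e (ai * ai * R * (bi * bi)) ≤
      ENNReal.ofReal (16 * lam ^ 2 * ‖ai f‖ ^ 4) := by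
    rw [hsN_rank_one e _ ((bi * bi) g) ((4 * lam) • ai f)]
    · apply ENNReal.ofReal_le_ofReal
      rw [norm_smul, Real.norm_of_nonneg (by positivity)]
      calc ‖(bi * bi) g‖ ^ 2 * (4 * lam * ‖ai f‖) ^ 2
          ≤ ‖ai f‖ ^ 2 * (4 * lam * ‖ai f‖) ^ 2 := by gcongr
        _ = _ := by ring
    · intro x
      have e1 : (ai * ai * R * (bi * bi)) x = (ai * ai) (R ((bi * bi) x)) := rfl
      have e2 : ⟪g, (bi * bi) x⟫_ℂ = ⟪(bi * bi) g, x⟫_ℂ := by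
        rw [← ContinuousLinearMap.adjoint_inner_left, ← ContinuousLinearMap.star_eq_adjoint,
          sbi.star_eq]
      rw [e1, hRx, e2, map_smul, ContinuousLinearMap.map_smul_of_tower, hagf]
  rw [hA, hB]
  exact ⟨hcore.1.trans hN, hcore.2.trans hN⟩
end
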